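/- arXiv:2401.10343 — 4 statements merged into one kernel-verified Lean document; each statement's English description precedes it below -/
import Mathlib

section
/- For every real t > 0 it holds that 2 sinh(t/2) tanh(t/2)/t² ≥ 0.42. -/
lemma cosh_taylor_lower (x : ℝ) :
    1 + x ^ 2 / 2 + x ^ 4 / 24 + x ^ 6 / 720 ≤ Real.cosh x := by
  have h := sum_le_hasSum (Finset.range 4) (fun n _ => by
    rw [pow_mul]; positivity) (Real.hasSum_cosh x)
  simp [Finset.sum_range_succ, Nat.factorial] at h
  linarith

lemma poly_pos_aux (y : ℝ) (hy : 0 ≤ y) :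
    0 ≤ 0.16 - (13 / 150) * y + (17 / 1800) * y ^ 2 + (141 / 72000) * y ^ 3 := by
  nlinarith [mul_nonneg hy (sq_nonneg (y - 2.5)), sq_nonneg (y - 2.5), sq_nonneg (y - 2.3)]

/-- For every real `t > 0`, `2 sinh(t/2) tanh(t/2) / t² ≥ 0.42`. -/
theorem two_sinh_tanh_div_sq_ge :
    ∀ t : ℝ, 0 < t → 0.42 ≤ 2 * Real.sinh (t / 2) * Real.tanh (t / 2) / t ^ 2 := by
  intro t ht
  obtain ⟨x, rfl⟩ : ∃ x, t = 2 * x := ⟨t / 2, by ring⟩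
  have hx : 0 < x := by linarith
  have e : 2 * x / 2 = x := by ring
  rw [e, Real.tanh_eq_sinh_div_cosh, le_div_iff₀ (by positivity)]
  have hc := Real.cosh_pos x
  rw [mul_div_assoc', le_div_iff₀ hc]
  have hs := Real.sinh_sq x
  have hT := cosh_taylor_lower x
  set c := Real.cosh x
  set y := x ^ 2 with hy
  have hy0 : 0 < y := by positivity
  have h4 : x ^ 4 = y ^ 2 := by rw [hy]; ring
  have h6 : x ^ 6 = y ^ 3 := by rw [hy]; ring
  rw [h4, h6] at hT
  obtain ⟨p, hp⟩ : ∃ p, p = 1 + y / 2 + y ^ 2 / 24 + y ^ 3 / 720 := ⟨_, rfl⟩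
  rw [← hp] at hT
  have hq : 0 ≤ p ^ 2 - 1 - 0.84 * y * p := by
    have h := mul_nonneg hy0.le (poly_pos_aux y hy0.le)
    have h5 : 0 ≤ y ^ 5 := by positivity
    have h6 : 0 ≤ y ^ 6 := by positivity
    rw [hp]
    ring_nf at h ⊢
    linarith
  have hpy : 0.84 * y ≤ p + p := by
    have : 0 ≤ y ^ 2 / 24 + y ^ 3 / 720 := by positivity
    linarith
  have key : 0 ≤ c ^ 2 - 1 - 0.84 * y * c := by
    nlinarith [mul_nonneg (sub_nonneg.2 hT) (by linarith : 0 ≤ c + p - 0.84 * y)]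
  have e2 : (2 * x) ^ 2 = 4 * y := by rw [hy]; ring
  rw [e2]
  nlinarith
end

section
/- Let n ≥ 1 and μ ∈ ℝ. On the n-qubit space (ℂ²)^{⊗n}, let H_μ = μ Σ_{j=1}^n (σ_z^{(j)} + I), where σ_z^{(j)} acts as σ_z on the j-th factor and as the identity elsewhere, and let |Φ⟩ = (|0⟩^{⊗n} + |1⟩^{⊗n})/√2 be the n-qubit GHZ state. Then ⟨Φ| H_μ² |Φ⟩ − (⟨Φ| H_μ |Φ⟩)² = μ² n². -/
open Matrix

/-- For `H_μ = μ Σ_j (σ_z^{(j)} + I)` on `n` qubits and the GHZ state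
`|Φ⟩ = (|1…1⟩ + |0…0⟩)/√2`, the variance of `H_μ` in `|Φ⟩` is `μ² n²`.
The `n`-qubit space is modeled as functions on the computational-basis configurations
`Fin n → Bool`, where the configuration value `true` at site `j` denotes the qubit state `|1⟩`
(with `σ_z |1⟩ = |1⟩`) and `false` denotes `|0⟩` (with `σ_z |0⟩ = -|0⟩`). -/
theorem ghz_variance_of_local_field
    (n : ℕ) (hn : 1 ≤ n) (μ : ℝ)
    (σzLoc : Fin n → Matrix (Fin n → Bool) (Fin n → Bool) ℂ)
    (hσz : ∀ j, σzLoc j = Matrix.diagonal (fun s => if s j then (1 : ℂ) else -1))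
    (Hμ : Matrix (Fin n → Bool) (Fin n → Bool) ℂ)
    (hHμ : Hμ = (μ : ℂ) • ∑ j, (σzLoc j + 1))
    (Φ : (Fin n → Bool) → ℂ)
    (hΦ : Φ = fun s => if s = (fun _ => true) ∨ s = (fun _ => false)
      then (((Real.sqrt 2)⁻¹ : ℝ) : ℂ) else 0) :
    star Φ ⬝ᵥ (Hμ ^ 2).mulVec Φ - (star Φ ⬝ᵥ Hμ.mulVec Φ) ^ 2 =
      ((μ ^ 2 * (n : ℝ) ^ 2 : ℝ) : ℂ) := by
  have hne : (fun _ : Fin n => true) ≠ (fun _ => false) := by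
    intro h
    have := congrFun h ⟨0, hn⟩
    simp at this
  have hc : (((Real.sqrt 2)⁻¹ : ℝ) : ℂ) * (((Real.sqrt 2)⁻¹ : ℝ) : ℂ) = 1 / 2 := by
    rw [← Complex.ofReal_mul, ← mul_inv, Real.mul_self_sqrt (by norm_num)]
    norm_num
  have key : ∀ f : (Fin n → Bool) → ℂ,
      star Φ ⬝ᵥ (Matrix.diagonal f).mulVec Φ
        = (f (fun _ => true) + f (fun _ => false)) / 2 := by
    intro f
    have h1 : ∀ s, star Φ s * (Matrix.diagonal f).mulVec Φ s
        = (if s = (fun _ => true) then f s / 2 else 0)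
          + (if s = (fun _ => false) then f s / 2 else 0) := by
      intro s
      rw [Matrix.mulVec_diagonal, Pi.star_apply, hΦ]
      by_cases ht : s = (fun _ => true)
      · have hf : s ≠ (fun _ => false) := fun h => hne (ht.symm.trans h)
        simp only [if_pos ht, if_neg hf, if_pos (Or.inl ht : s = (fun _ => true) ∨ s = (fun _ => false)),
          Complex.star_def, Complex.conj_ofReal]
        linear_combination f s * hc
      · by_cases hf : s = (fun _ => false)
        · simp only [if_neg ht, if_pos hf, if_pos (Or.inr hf : s = (fun _ => true) ∨ s = (fun _ => false)),
            Complex.star_def, Complex.conj_ofReal]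
          linear_combination f s * hc
        · simp [ht, hf]
    unfold dotProduct
    rw [Finset.sum_congr rfl (fun s _ => h1 s), Finset.sum_add_distrib]
    simp only [Finset.sum_ite_eq', Finset.mem_univ, if_true]
    ring
  have hH : Hμ = Matrix.diagonal
      (fun s => (μ : ℂ) * ∑ j, ((if s j then (1 : ℂ) else -1) + 1)) := by
    rw [hHμ]
    ext s t
    by_cases hst : s = t
    · subst hst
      simp [hσz, Matrix.sum_apply]
    · simp [hσz, Matrix.sum_apply, hst]
  rw [hH, Matrix.diagonal_pow, key, key]
  simp
  ring
end

section
/- Let n ≥ 1 and μ, λ > 0. On the n-qubit space (ℂ²)^{⊗n}, let H̃ = μ Σ_{j=1}^n σ_z^{(j)} − λ n · (σ_x ⊗ σ_x ⊗ ⋯ ⊗ σ_x) (n factors of σ_x). Then the smallest eigenvalue of the Hermitian operator H̃ is −n√(μ² + λ²), and the corresponding eigenspace is one-dimensional, spanned by the vector λ·|1⟩^{⊗n} + (μ + √(μ² + λ²))·|0⟩^{⊗n}. -/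
open Matrix


/-- Total magnetization of a configuration. -/
noncomputable def magn {n : ℕ} (s : Fin n → Bool) : ℝ := ∑ j, if s j then (1 : ℝ) else -1

lemma magn_flip {n : ℕ} (s : Fin n → Bool) : magn (fun j => !(s j)) = - magn s := by
  unfold magn
  rw [← Finset.sum_neg_distrib]
  refine Finset.sum_congr rfl fun j _ => ?_
  cases h : s j <;> simp [h]

lemma magn_le {n : ℕ} (s : Fin n → Bool) : magn s ≤ n := by
  have h : magn s ≤ ∑ j : Fin n, (1 : ℝ) := by
    unfold magn
    refine Finset.sum_le_sum fun j _ => ?_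
    split_ifs <;> norm_num
  simpa using h

lemma magn_sq_le {n : ℕ} (s : Fin n → Bool) : magn s ^ 2 ≤ (n : ℝ) ^ 2 := by
  have h1 := magn_le s
  have h2 := magn_le (fun j => !(s j))
  rw [magn_flip] at h2
  exact sq_le_sq' (by linarith) h1

lemma eq_true_of_magn {n : ℕ} (s : Fin n → Bool) (h : magn s = n) : s = fun _ => true := by
  have h0 : ∑ j : Fin n, ((1 : ℝ) - if s j then (1 : ℝ) else -1) = 0 := by
    rw [Finset.sum_sub_distrib]
    unfold magn at h
    rw [h]; simp
  rw [Finset.sum_eq_zero_iff_of_nonneg (fun j _ => by split_ifs <;> norm_num)] at h0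
  funext j
  have := h0 j (Finset.mem_univ j)
  cases hs : s j
  · rw [hs] at this; norm_num at this
  · rfl

lemma eq_of_magn_sq {n : ℕ} (s : Fin n → Bool) (h : magn s ^ 2 = (n : ℝ) ^ 2) :
    s = (fun _ => true) ∨ s = (fun _ => false) := by
  rcases sq_eq_sq_iff_eq_or_eq_neg.mp h with h | h
  · exact Or.inl (eq_true_of_magn s h)
  · right
    have := eq_true_of_magn (fun j => !(s j)) (by rw [magn_flip, h]; ring)
    funext j
    have := congrFun this j
    simpa using this

lemma magn_true {n : ℕ} : magn (fun _ : Fin n => true) = n := by simp [magn]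

lemma magn_false {n : ℕ} : magn (fun _ : Fin n => false) = -n := by simp [magn]

/-- For `H̃ = μ Σ_j σ_z^{(j)} - λ n · σ_x⊗⋯⊗σ_x` on `n` qubits with
`μ, λ > 0`, the smallest eigenvalue is `-n √(μ² + λ²)`, with one-dimensional eigenspace
spanned by `λ |1…1⟩ + (μ + √(μ² + λ²)) |0…0⟩`.
The `n`-qubit space is modeled as functions on the computational-basis configurations
`Fin n → Bool`, where `true` at site `j` denotes `|1⟩` (`σ_z |1⟩ = |1⟩`, `σ_x |1⟩ = |0⟩`)
and `false` denotes `|0⟩`; the all-`σ_x` tensor product flips every bit. -/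
theorem ground_state_of_ghz_hamiltonian
    (n : ℕ) (hn : 1 ≤ n) (μ lam : ℝ) (hμ : 0 < μ) (hlam : 0 < lam)
    (σzLoc : Fin n → Matrix (Fin n → Bool) (Fin n → Bool) ℂ)
    (hσz : ∀ j, σzLoc j = Matrix.diagonal (fun s => if s j then (1 : ℂ) else -1))
    (X : Matrix (Fin n → Bool) (Fin n → Bool) ℂ)
    (hX : X = Matrix.of fun s t => if s = (fun j => !(t j)) then (1 : ℂ) else 0)
    (Ht : Matrix (Fin n → Bool) (Fin n → Bool) ℂ)
    (hHt : Ht = (μ : ℂ) • ∑ j, σzLoc j - ((lam * n : ℝ) : ℂ) • X)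
    (g : (Fin n → Bool) → ℂ)
    (hg : g = fun s => if s = (fun _ => true) then ((lam : ℝ) : ℂ)
      else if s = (fun _ => false) then ((μ + Real.sqrt (μ ^ 2 + lam ^ 2) : ℝ) : ℂ) else 0) :
    Ht.mulVec g = ((-(n * Real.sqrt (μ ^ 2 + lam ^ 2)) : ℝ) : ℂ) • g ∧
    (∀ (c : ℝ) (x : (Fin n → Bool) → ℂ), x ≠ 0 → Ht.mulVec x = (c : ℂ) • x →
      -(n * Real.sqrt (μ ^ 2 + lam ^ 2)) ≤ c) ∧
    (∀ x : (Fin n → Bool) → ℂ,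
      Ht.mulVec x = ((-(n * Real.sqrt (μ ^ 2 + lam ^ 2)) : ℝ) : ℂ) • x →
      ∃ c : ℂ, x = c • g) := by
  have hmul : ∀ (x : (Fin n → Bool) → ℂ) (s : Fin n → Bool), Ht.mulVec x s =
      (μ : ℂ) * (magn s : ℂ) * x s - (lam : ℂ) * n * x (fun j => !(s j)) := by
    intro x s
    have hXx : X.mulVec x s = x (fun j => !(s j)) := by
      rw [hX]
      simp only [Matrix.mulVec, dotProduct, Matrix.of_apply]
      rw [Finset.sum_eq_single (fun j => !(s j))]
      · simp
      · intro t _ ht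
        rw [if_neg, zero_mul]
        intro h
        apply ht
        rw [h]
        simp
      · simp
    rw [hHt, Matrix.sub_mulVec, Matrix.smul_mulVec, Matrix.smul_mulVec, Matrix.sum_mulVec]
    simp only [Pi.sub_apply, Pi.smul_apply, Finset.sum_apply, hXx, hσz, Matrix.mulVec_diagonal,
      smul_eq_mul]
    rw [← Finset.sum_mul]
    have hm : (magn s : ℂ) = ∑ j, if s j then (1 : ℂ) else -1 := by
      unfold magn
      rw [Complex.ofReal_sum]
      refine Finset.sum_congr rfl fun j _ => ?_
      split_ifs <;> simp
    rw [hm]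
    push_cast
    ring
  clear hHt hX hσz
  set r := Real.sqrt (μ ^ 2 + lam ^ 2) with hr
  have hr0 : 0 ≤ r := Real.sqrt_nonneg _
  have hr2 : r ^ 2 = μ ^ 2 + lam ^ 2 := Real.sq_sqrt (by positivity)
  have hr2c : (r : ℂ) ^ 2 = (μ : ℂ) ^ 2 + (lam : ℂ) ^ 2 := by exact_mod_cast hr2
  have hn0 : (0 : ℝ) < n := by exact_mod_cast hn
  have hnc : (n : ℂ) ≠ 0 := by exact_mod_cast hn0.ne'
  have hFT : ((fun _ => false) : Fin n → Bool) ≠ fun _ => true := by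
    intro h
    have := congrFun h ⟨0, hn⟩
    simp at this
  have hgT : g (fun _ => true) = lam := by rw [hg]; simp
  have hgF : g (fun _ => false) = μ + r := by
    rw [hg]; simp only [if_neg hFT, if_true]; push_cast; rfl
  have hg0 : ∀ s, s ≠ (fun _ => true) → s ≠ (fun _ => false) → g s = 0 := by
    intro s h1 h2; rw [hg]; simp only [if_neg h1, if_neg h2]
  -- the key spectral identity
  have key : ∀ (c : ℝ) (x : (Fin n → Bool) → ℂ), Ht.mulVec x = (c : ℂ) • x → ∀ s, x s ≠ 0 →
      c ^ 2 = μ ^ 2 * magn s ^ 2 + lam ^ 2 * (n : ℝ) ^ 2 := by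
    intro c x hx s hs
    have h1 := congrFun hx s
    have h2 := congrFun hx (fun j => !(s j))
    rw [hmul] at h1 h2
    simp only [Pi.smul_apply, smul_eq_mul, magn_flip, Bool.not_not] at h1 h2
    push_cast at h1 h2
    have h3 : ((c : ℂ) ^ 2 - ((μ : ℂ) ^ 2 * (magn s : ℂ) ^ 2 + (lam : ℂ) ^ 2 * (n : ℂ) ^ 2)) * x s
        = 0 := by
      linear_combination (-(c : ℂ) - μ * magn s) * h1 + lam * n * h2
    rcases mul_eq_zero.mp h3 with h | h
    · exact_mod_cast sub_eq_zero.mp h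
    · exact absurd h hs
  refine ⟨?_, ?_, ?_⟩
  · funext s
    rw [hmul]
    simp only [Pi.smul_apply, smul_eq_mul]
    by_cases h1 : s = fun _ => true
    · subst h1
      simp only [Bool.not_true, hgT, hgF, magn_true]
      push_cast
      ring
    by_cases h2 : s = fun _ => false
    · subst h2
      simp only [Bool.not_false, hgT, hgF, magn_false]
      push_cast
      linear_combination (n : ℂ) * hr2c
    · rw [hg0 s h1 h2, hg0 (fun j => !(s j))]
      · simp
      · intro h; apply h2; funext j; simpa using congrFun h j
      · intro h; apply h1; funext j; simpa using congrFun h j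
  · intro c x hx0 hx
    obtain ⟨s, hs⟩ := Function.ne_iff.mp hx0
    have hc := key c x hx s hs
    have hm := magn_sq_le s
    have : c ^ 2 ≤ (n * r) ^ 2 := by
      rw [hc, mul_pow, hr2]
      nlinarith [mul_le_mul_of_nonneg_left hm (sq_nonneg μ)]
    exact (abs_le_of_sq_le_sq' this (by positivity)).1
  · intro x hx
    have hz : ∀ s, s ≠ (fun _ => true) → s ≠ (fun _ => false) → x s = 0 := by
      intro s h1 h2
      by_contra hs
      have hc := key _ x hx s hs
      rw [neg_sq, mul_pow, hr2] at hc
      have : magn s ^ 2 = (n : ℝ) ^ 2 := by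
        have : μ ^ 2 * magn s ^ 2 = μ ^ 2 * (n : ℝ) ^ 2 := by linarith
        exact mul_left_cancel₀ (by positivity) this
      rcases eq_of_magn_sq s this with h | h
      · exact h1 h
      · exact h2 h
    have hpos : (μ : ℂ) + r ≠ 0 := by
      have : μ + r ≠ 0 := by positivity
      exact_mod_cast this
    have hT := congrFun hx (fun _ => true)
    rw [hmul] at hT
    simp only [Pi.smul_apply, smul_eq_mul, Bool.not_true, magn_true] at hT
    push_cast at hT
    have hT2 : ((μ : ℂ) + r) * x (fun _ => true) = lam * x (fun _ => false) := by
      apply mul_left_cancel₀ hnc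
      linear_combination hT
    refine ⟨x (fun _ => false) / (μ + r), ?_⟩
    funext s
    simp only [Pi.smul_apply, smul_eq_mul]
    by_cases h1 : s = fun _ => true
    · subst h1
      rw [hgT]
      field_simp
      linear_combination hT2
    by_cases h2 : s = fun _ => false
    · subst h2
      rw [hgF]
      field_simp
    · rw [hg0 s h1 h2, hz s h1 h2, mul_zero]
end

section
/- Let n ≥ 1 and μ, λ > 0. On the n-qubit space (ℂ²)^{⊗n}, let |gs⟩ be the unit vector proportional to λ·|1⟩^{⊗n} + (μ + √(μ² + λ²))·|0⟩^{⊗n} (the ground state of H̃ = μ Σ_j σ_z^{(j)} − λn·⊗_j σ_x), and let A = Σ_{j=1}^n σ_z^{(j)}. Then the variance of A in this state satisfies ⟨gs| A² |gs⟩ − (⟨gs| A |gs⟩)² = n² λ²/(μ² + λ²). -/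
open Matrix

/-- For any unit vector `ψ` proportional to the ground state
`λ |1…1⟩ + (μ + √(μ² + λ²)) |0…0⟩` of `H̃ = μ Σ_j σ_z^{(j)} - λn ⊗_j σ_x`, the variance of
`A = Σ_j σ_z^{(j)}` in `ψ` is `n² λ²/(μ² + λ²)`.
The `n`-qubit space is modeled as functions on the computational-basis configurations
`Fin n → Bool`, where `true` at site `j` denotes `|1⟩` (`σ_z |1⟩ = |1⟩`) and `false` denotes
`|0⟩`. -/
theorem ground_state_variance_of_total_sigma_z
    (n : ℕ) (hn : 1 ≤ n) (μ lam : ℝ) (hμ : 0 < μ) (hlam : 0 < lam)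
    (σzLoc : Fin n → Matrix (Fin n → Bool) (Fin n → Bool) ℂ)
    (hσz : ∀ j, σzLoc j = Matrix.diagonal (fun s => if s j then (1 : ℂ) else -1))
    (A : Matrix (Fin n → Bool) (Fin n → Bool) ℂ) (hA : A = ∑ j, σzLoc j)
    (g : (Fin n → Bool) → ℂ)
    (hg : g = fun s => if s = (fun _ => true) then ((lam : ℝ) : ℂ)
      else if s = (fun _ => false) then ((μ + Real.sqrt (μ ^ 2 + lam ^ 2) : ℝ) : ℂ) else 0)
    (ψ : (Fin n → Bool) → ℂ) (c : ℂ) (hψ : ψ = c • g) (hunit : star ψ ⬝ᵥ ψ = 1) :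
    star ψ ⬝ᵥ (A ^ 2).mulVec ψ - (star ψ ⬝ᵥ A.mulVec ψ) ^ 2 =
      (((n : ℝ) ^ 2 * lam ^ 2 / (μ ^ 2 + lam ^ 2) : ℝ) : ℂ) := by
  have hTF : (fun _ => false : Fin n → Bool) ≠ (fun _ => true) := by
    intro h
    have := congrFun h ⟨0, hn⟩
    simp at this
  set r : ℝ := Real.sqrt (μ ^ 2 + lam ^ 2) with hr
  have hr2 : r ^ 2 = μ ^ 2 + lam ^ 2 := Real.sq_sqrt (by positivity)
  have hr0 : 0 < r := Real.sqrt_pos.mpr (by positivity)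
  have key : ∀ f : (Fin n → Bool) → ℂ, star ψ ⬝ᵥ (Matrix.diagonal f).mulVec ψ =
      (star c * c) * ((lam : ℂ) ^ 2 * f (fun _ => true)
        + ((μ + r : ℝ) : ℂ) ^ 2 * f (fun _ => false)) := by
    intro f
    have h1 : ∀ s, star ψ s * (Matrix.diagonal f).mulVec ψ s =
        (if s = (fun _ => true) then (star c * c) * ((lam : ℂ) ^ 2 * f (fun _ => true)) else 0)
        + (if s = (fun _ => false) then
            (star c * c) * (((μ + r : ℝ) : ℂ) ^ 2 * f (fun _ => false)) else 0) := by
      intro s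
      rw [Matrix.mulVec_diagonal, Pi.star_apply, hψ, Pi.smul_apply, hg]
      by_cases h : s = (fun _ => true)
      · subst h
        simp only [if_true, if_neg hTF.symm, smul_eq_mul, star_mul', Complex.star_def,
          Complex.conj_ofReal]
        ring
      · by_cases h' : s = (fun _ => false)
        · subst h'
          simp only [if_true, if_neg hTF, smul_eq_mul, star_mul', Complex.star_def,
            Complex.conj_ofReal]
          ring
        · simp [h, h']
    rw [dotProduct, Finset.sum_congr rfl (fun s _ => h1 s), Finset.sum_add_distrib,
      Finset.sum_ite_eq' , Finset.sum_ite_eq']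
    simp only [Finset.mem_univ, if_true]
    ring
  have hAd : A = Matrix.diagonal (fun s => ∑ j, if s j then (1 : ℂ) else -1) := by
    rw [hA]
    ext s t
    rw [Matrix.sum_apply]
    by_cases h : s = t
    · subst h
      simp [hσz]
    · simp [hσz, h]
  have hN := key (fun _ => 1)
  rw [Matrix.diagonal_one, Matrix.one_mulVec, hunit] at hN
  rw [hAd, Matrix.diagonal_pow, key, key]
  simp only [Pi.pow_apply, if_true, Bool.false_eq_true, if_false, Finset.sum_const,
    Finset.card_univ, Fintype.card_fin, nsmul_eq_mul]
  have hb : lam ^ 2 + (μ + r) ^ 2 = 2 * r * (μ + r) := by linear_combination -hr2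
  have hbc : (lam : ℂ) ^ 2 + ((μ + r : ℝ) : ℂ) ^ 2 = 2 * r * ((μ + r : ℝ) : ℂ) := by
    exact_mod_cast hb
  have hB0 : ((μ + r : ℝ) : ℂ) ≠ 0 := by exact_mod_cast (by positivity : μ + r ≠ 0)
  have hrc : (r : ℂ) ≠ 0 := by exact_mod_cast hr0.ne'
  rw [← hr2]
  push_cast only [Complex.ofReal_div, Complex.ofReal_mul, Complex.ofReal_pow,
    Complex.ofReal_natCast]
  generalize ((μ + r : ℝ) : ℂ) = B at *
  generalize star c * c = K at *
  have hK : K = 1 / (2 * r * B) := by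
    rw [eq_div_iff (by simp [hrc, hB0])]
    rw [← hbc, hN]; ring
  have hB2 : B ^ 2 = 2 * r * B - (lam : ℂ) ^ 2 := by linear_combination hbc
  have hN' : K * (lam : ℂ) ^ 2 = 1 - K * B ^ 2 := by linear_combination -hN
  have e : K * ((lam : ℂ) ^ 2 * ((n : ℂ) * 1) ^ 2 + B ^ 2 * ((n : ℂ) * -1) ^ 2)
      - (K * ((lam : ℂ) ^ 2 * ((n : ℂ) * 1) + B ^ 2 * ((n : ℂ) * -1))) ^ 2
      = 4 * (n : ℂ) ^ 2 * K ^ 2 * (lam : ℂ) ^ 2 * B ^ 2 := by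
    linear_combination ((n : ℂ) ^ 2 * (K * ((lam : ℂ) ^ 2 + B ^ 2))) * hN
  rw [e, hK]
  field_simp
  ring
end
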